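/- Lemma 5: for every iteration i (1 ≤ i ≤ ⌈m/2⌉) of Algorithm 2 run with the x-approval rule, |U^i| = 1 or |D^i| = 1. -/

import Mathlib

open Finset
open scoped Classical

variable {O : Type*} [Fintype O] [DecidableEq O]

/-- A vote is a strict total order on the outcome set `O`, represented by its position
function: `p o` is the number of outcomes that `o` is preferred over, so the most
preferred outcome has position `m - 1` and the least preferred position `0`. -/
def IsVote (p : O → ℕ) : Prop :=
  Function.Injective p ∧ ∀ o : O, p o < Fintype.card O

/-- The total score of candidate `c` under the scoring vector `sc` (`sc j` is the number
of points awarded to the candidate at position `j`) for the profile `P`. -/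
def score (sc : ℕ → ℤ) (P : List (O → ℕ)) (c : O) : ℤ :=
  (P.map fun q => sc (q c)).sum

/-- The positional scoring rule used as a social welfare function: candidates are ordered
by decreasing total score, ties being broken by the fixed strict tie-breaking order `tb`
(a smaller `tb`-value means preferred by the tie-breaking order).  The output is again a
position function: the position of `c` is the number of candidates ranked below `c`. -/
def swf (sc : ℕ → ℤ) (tb : O → ℕ) (P : List (O → ℕ)) : O → ℕ := fun c =>
  (univ.filter fun c' =>
      score sc P c' < score sc P c ∨ (score sc P c' = score sc P c ∧ tb c < tb c')).card

/-- `topSet p j = A^j(p)`, the set of the `j` most preferred outcomes of `p`. -/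
def topSet (p : O → ℕ) (j : ℕ) : Finset O :=
  univ.filter fun o => Fintype.card O - j ≤ p o

/-- The least `j ≥ 1` for which `A^j(p_t) ∩ A^j(p_o)` is nonempty, i.e. the iteration at
which the Rational Compromise rule terminates. -/
noncomputable def rcIndex (pt po : O → ℕ) : ℕ :=
  sInf {j | 1 ≤ j ∧ (topSet pt j ∩ topSet po j).Nonempty}

/-- The Rational Compromise bargaining rule: `A^j(p_t) ∩ A^j(p_o)` for the least `j ≥ 1`
making this intersection nonempty. -/
noncomputable def RC (pt po : O → ℕ) : Finset O :=
  topSet pt (rcIndex pt po) ∩ topSet po (rcIndex pt po)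

/-- The `n` most preferred members of `S` according to the ranking `r`. -/
def topWithin (r : O → ℕ) (S : Finset O) (n : ℕ) : Finset O :=
  S.filter fun o => (S.filter fun o' => r o < r o').card < n

/-- The `n` least preferred members of `S` according to the ranking `r`. -/
def botWithin (r : O → ℕ) (S : Finset O) (n : ℕ) : Finset O :=
  S.filter fun o => (S.filter fun o' => r o' < r o).card < n

/-- The vote built by the algorithms from a current ranking `r` and a set `H`:
the members of `H` occupy the `|H|` highest positions in reverse order of `r`
(the `r`-least preferred member of `H` is placed highest), and the members of `O ∖ H`
occupy the remaining lowest positions in reverse order of `r` (the `r`-most preferred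
of them is placed lowest). -/
def buildVote (r : O → ℕ) (H : Finset O) : O → ℕ := fun o =>
  if o ∈ H then Fintype.card O - H.card + (H.filter fun h => r o < r h).card
  else (univ.filter fun c => c ∉ H ∧ r o < r c).card

/-- `H^i` for the constructive algorithms: the preferred outcome `p` together with the
`i - 1` most preferred outcomes of `p_t` that do not belong to `A^i(p_o)`. -/
def Hset (pt po : O → ℕ) (p : O) (i : ℕ) : Finset O :=
  insert p (topWithin pt ((univ \ topSet po i).erase p) (i - 1))

/-- `H^i` for the destructive algorithms: `p*`, the most preferred outcome of `p_t` other
than `e` that belongs to `A^i(p_o)`, together with the `i - 1` most preferred outcomes of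
`p_t` other than `e` and `p*`. -/
def HsetD (pt po : O → ℕ) (e : O) (i : ℕ) : Finset O :=
  topWithin pt ((topSet po i).erase e) 1 ∪
    topWithin pt ((univ.erase e) \ topWithin pt ((topSet po i).erase e) 1) (i - 1)

/-- The manipulator profile built by Algorithm 2 (for a fixed iteration whose set is `H`)
after the given number of stages: at each stage one more vote is appended, built from the
current social ranking `F(p⃗ ∪ p⃗_M)`. -/
def stageProfile (sc : ℕ → ℤ) (tb : O → ℕ) (P : List (O → ℕ)) (H : Finset O) :
    ℕ → List (O → ℕ)
  | 0 => []
  | n + 1 =>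
      stageProfile sc tb P H n ++
        [buildVote (swf sc tb (P ++ stageProfile sc tb P H n)) H]

/-- The vote constructed by Algorithm 2 at stage `ℓ` (1-indexed). -/
def stageVote (sc : ℕ → ℤ) (tb : O → ℕ) (P : List (O → ℕ)) (H : Finset O) (ℓ : ℕ) :
    O → ℕ :=
  buildVote (swf sc tb (P ++ stageProfile sc tb P H (ℓ - 1))) H

/-- The sets `U^i_s`:  `U^i_0` consists of the member of `H^i` with the lowest position in
`p_t`, and `U^i_{s+1}` adds every candidate ranked above some member of `U^i_s` by the
stage-`l` vote (`1 ≤ l < k`) but below some member of `U^i_s` by the stage-`(l+1)` vote. -/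
noncomputable def Uaux (sc : ℕ → ℤ) (tb : O → ℕ) (P : List (O → ℕ)) (pt : O → ℕ)
    (H : Finset O) (k : ℕ) : ℕ → Finset O
  | 0 => botWithin pt H 1
  | s + 1 =>
      Uaux sc tb P pt H k s ∪
        univ.filter fun u =>
          ∃ l, 1 ≤ l ∧ l < k ∧
            (∃ u' ∈ Uaux sc tb P pt H k s,
              stageVote sc tb P H l u' < stageVote sc tb P H l u) ∧
            (∃ u' ∈ Uaux sc tb P pt H k s,
              stageVote sc tb P H (l + 1) u < stageVote sc tb P H (l + 1) u')

/-- `U^i = ⋃ₛ U^i_s`. -/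
noncomputable def Uset (sc : ℕ → ℤ) (tb : O → ℕ) (P : List (O → ℕ)) (pt : O → ℕ)
    (H : Finset O) (k : ℕ) : Finset O :=
  univ.filter fun u => ∃ s, u ∈ Uaux sc tb P pt H k s

/-- The sets `D^i_s`: `D^i_0` consists of the member of `O ∖ H^i` with the highest position
in `p_t`, and `D^i_{s+1}` adds every candidate ranked below some member of `D^i_s` by the
stage-`l` vote (`1 ≤ l < k`) but above some member of `D^i_s` by the stage-`(l+1)` vote. -/
noncomputable def Daux (sc : ℕ → ℤ) (tb : O → ℕ) (P : List (O → ℕ)) (pt : O → ℕ)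
    (H : Finset O) (k : ℕ) : ℕ → Finset O
  | 0 => topWithin pt (univ \ H) 1
  | s + 1 =>
      Daux sc tb P pt H k s ∪
        univ.filter fun d =>
          ∃ l, 1 ≤ l ∧ l < k ∧
            (∃ d' ∈ Daux sc tb P pt H k s,
              stageVote sc tb P H l d < stageVote sc tb P H l d') ∧
            (∃ d' ∈ Daux sc tb P pt H k s,
              stageVote sc tb P H (l + 1) d' < stageVote sc tb P H (l + 1) d)

/-- `D^i = ⋃ₛ D^i_s`. -/
noncomputable def Dset (sc : ℕ → ℤ) (tb : O → ℕ) (P : List (O → ℕ)) (pt : O → ℕ)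
    (H : Finset O) (k : ℕ) : Finset O :=
  univ.filter fun d => ∃ s, d ∈ Daux sc tb P pt H k s

/-- The Borda scoring vector `(m-1, m-2, …, 1, 0)`: position `j` gets `j` points. -/
def bordaVec : ℕ → ℤ := fun j => (j : ℤ)

/-- The `x`-approval scoring vector for `m` candidates: the `x` highest positions get one
point, the rest get zero. -/
def approvalVec (m x : ℕ) : ℕ → ℤ := fun j => if m ≤ j + x then 1 else 0

/-- `sc` is a scoring vector for `m` candidates: `s_{m-1} ≥ … ≥ s_0 ≥ 0` and
`s_{m-1} > s_0`. -/
def IsScoringVector (m : ℕ) (sc : ℕ → ℤ) : Prop :=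
  (∀ j, j + 1 < m → sc j ≤ sc (j + 1)) ∧ 0 ≤ sc 0 ∧ sc 0 < sc (m - 1)

/-- Algorithm 1 (constructive single-voter manipulation) returns the vote `pa`:
the guard `pos(p, p_o) ≥ ⌈m/2⌉` holds and `pa` is the vote built at the first iteration
`i ∈ {1, …, ⌈m/2⌉}` at which the manipulation check succeeds. -/
def alg1Returns (sc : ℕ → ℤ) (tb : O → ℕ) (P : List (O → ℕ)) (po : O → ℕ) (p : O)
    (pa : O → ℕ) : Prop :=
  (Fintype.card O + 1) / 2 ≤ po p ∧
    ∃ i, 1 ≤ i ∧ i ≤ (Fintype.card O + 1) / 2 ∧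
      pa = buildVote (swf sc tb P) (Hset (swf sc tb P) po p i) ∧
      RC (swf sc tb (P ++ [pa])) po = {p} ∧
      ∀ j, 1 ≤ j → j < i →
        RC (swf sc tb (P ++ [buildVote (swf sc tb P) (Hset (swf sc tb P) po p j)])) po ≠
          {p}

/-- Algorithm 2 (constructive coalitional manipulation) run with `k` manipulators returns
the profile `PM`: the guard `pos(p, p_o) ≥ ⌈m/2⌉` holds and `PM` is the `k`-stage profile
built at the first iteration `i ∈ {1, …, ⌈m/2⌉}` at which the manipulation check succeeds. -/
def alg2Returns (sc : ℕ → ℤ) (tb : O → ℕ) (P : List (O → ℕ)) (po : O → ℕ) (p : O)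
    (k : ℕ) (PM : List (O → ℕ)) : Prop :=
  (Fintype.card O + 1) / 2 ≤ po p ∧
    ∃ i, 1 ≤ i ∧ i ≤ (Fintype.card O + 1) / 2 ∧
      PM = stageProfile sc tb P (Hset (swf sc tb P) po p i) k ∧
      RC (swf sc tb (P ++ PM)) po = {p} ∧
      ∀ j, 1 ≤ j → j < i →
        RC (swf sc tb (P ++ stageProfile sc tb P (Hset (swf sc tb P) po p j) k)) po ≠ {p}

/-- The modified Algorithm 1 (destructive single-voter manipulation) returns the vote
`pa`: the guard `pos(e, p_o) < ⌊m/2⌋` fails and `pa` is the vote built at the first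
iteration `i ∈ {1, …, ⌈m/2⌉}` at which `e` is excluded from the Rational Compromise. -/
def alg1ReturnsD (sc : ℕ → ℤ) (tb : O → ℕ) (P : List (O → ℕ)) (po : O → ℕ) (e : O)
    (pa : O → ℕ) : Prop :=
  Fintype.card O / 2 ≤ po e ∧
    ∃ i, 1 ≤ i ∧ i ≤ (Fintype.card O + 1) / 2 ∧
      pa = buildVote (swf sc tb P) (HsetD (swf sc tb P) po e i) ∧
      e ∉ RC (swf sc tb (P ++ [pa])) po ∧
      ∀ j, 1 ≤ j → j < i →
        e ∈ RC (swf sc tb (P ++ [buildVote (swf sc tb P) (HsetD (swf sc tb P) po e j)])) po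

/-- The modified Algorithm 2 (destructive coalitional manipulation) run with `k`
manipulators returns the profile `PM`: the guard `pos(e, p_o) < ⌊m/2⌋` fails and `PM` is
the `k`-stage profile built at the first iteration `i ∈ {1, …, ⌈m/2⌉}` at which `e` is
excluded from the Rational Compromise. -/
def alg2ReturnsD (sc : ℕ → ℤ) (tb : O → ℕ) (P : List (O → ℕ)) (po : O → ℕ) (e : O)
    (k : ℕ) (PM : List (O → ℕ)) : Prop :=
  Fintype.card O / 2 ≤ po e ∧
    ∃ i, 1 ≤ i ∧ i ≤ (Fintype.card O + 1) / 2 ∧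
      PM = stageProfile sc tb P (HsetD (swf sc tb P) po e i) k ∧
      e ∉ RC (swf sc tb (P ++ PM)) po ∧
      ∀ j, 1 ≤ j → j < i →
        e ∈ RC (swf sc tb (P ++ stageProfile sc tb P (HsetD (swf sc tb P) po e j) k)) po

/-- The set `U^i` arising from running the `k` stages of Algorithm 2 at iteration `i`. -/
noncomputable def UsetAlg (sc : ℕ → ℤ) (tb : O → ℕ) (P : List (O → ℕ)) (po : O → ℕ)
    (p : O) (i k : ℕ) : Finset O :=
  Uset sc tb P (swf sc tb P) (Hset (swf sc tb P) po p i) k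

/-- The set `D^i` arising from running the `k` stages of Algorithm 2 at iteration `i`. -/
noncomputable def DsetAlg (sc : ℕ → ℤ) (tb : O → ℕ) (P : List (O → ℕ)) (po : O → ℕ)
    (p : O) (i k : ℕ) : Finset O :=
  Dset sc tb P (swf sc tb P) (Hset (swf sc tb P) po p i) k

/-- The vote constructed at stage `ℓ` of iteration `i` of Algorithm 2. -/
def stageVoteAlg (sc : ℕ → ℤ) (tb : O → ℕ) (P : List (O → ℕ)) (po : O → ℕ)
    (p : O) (i ℓ : ℕ) : O → ℕ :=
  stageVote sc tb P (Hset (swf sc tb P) po p i) ℓ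

/-- `s_ℓ(c)`: the total score of candidate `c` in `F(p⃗ ∪ p⃗_M)` after stage `ℓ` of
iteration `i` of Algorithm 2. -/
def stageScoreAlg (sc : ℕ → ℤ) (tb : O → ℕ) (P : List (O → ℕ)) (po : O → ℕ)
    (p : O) (i ℓ : ℕ) (c : O) : ℤ :=
  score sc (P ++ stageProfile sc tb P (Hset (swf sc tb P) po p i) ℓ) c

/-- `F(p⃗ ∪ p⃗_M)` after stage `ℓ` of iteration `i` of Algorithm 2. -/
def stageSwfAlg (sc : ℕ → ℤ) (tb : O → ℕ) (P : List (O → ℕ)) (po : O → ℕ)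
    (p : O) (i ℓ : ℕ) : O → ℕ :=
  swf sc tb (P ++ stageProfile sc tb P (Hset (swf sc tb P) po p i) ℓ)

/-- The strict comparison underlying `swf`: lower score, or equal score and worse tie-breaking. -/
lemma swf_lt_swf_iff (sc : ℕ → ℤ) {tb : O → ℕ} (htb : Function.Injective tb)
    (P : List (O → ℕ)) (a b : O) :
    swf sc tb P a < swf sc tb P b ↔
      score sc P a < score sc P b ∨ (score sc P a = score sc P b ∧ tb b < tb a) := by
  have mono : ∀ a b : O,
      (score sc P a < score sc P b ∨ (score sc P a = score sc P b ∧ tb b < tb a)) →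
      swf sc tb P a < swf sc tb P b := by
    intro a b hab
    apply Finset.card_lt_card
    rw [Finset.ssubset_iff_of_subset]
    · exact ⟨a, by simpa using hab, by simp⟩
    · intro c hc
      simp only [mem_filter, mem_univ, true_and] at hc ⊢
      omega
  refine ⟨fun h => ?_, mono a b⟩
  by_contra hab
  by_cases hba : score sc P b < score sc P a ∨ (score sc P b = score sc P a ∧ tb a < tb b)
  · exact absurd (mono b a hba) (by omega)
  · have htie : tb a = tb b := by omega
    exact absurd (htb htie) (by rintro rfl; exact lt_irrefl _ h)

lemma swf_injective (sc : ℕ → ℤ) {tb : O → ℕ} (htb : Function.Injective tb)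
    (P : List (O → ℕ)) : Function.Injective (swf sc tb P) := by
  intro a b hab
  have h₁ := swf_lt_swf_iff sc htb P a b
  have h₂ := swf_lt_swf_iff sc htb P b a
  apply htb
  omega

lemma botWithin_one_eq_singleton {r : O → ℕ} (hr : Function.Injective r) {S : Finset O}
    {a : O} (ha : a ∈ S) (hmin : ∀ b ∈ S, r a ≤ r b) : botWithin r S 1 = {a} := by
  ext b
  simp only [botWithin, mem_filter, Nat.lt_one_iff, Finset.card_eq_zero,
    Finset.filter_eq_empty_iff, not_lt, mem_singleton]
  constructor
  · rintro ⟨hb, h⟩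
    exact hr (le_antisymm (h ha) (hmin b hb))
  · rintro rfl
    exact ⟨ha, fun c hc => hmin c hc⟩

lemma topWithin_one_eq_singleton {r : O → ℕ} (hr : Function.Injective r) {S : Finset O}
    {a : O} (ha : a ∈ S) (hmax : ∀ b ∈ S, r b ≤ r a) : topWithin r S 1 = {a} := by
  ext b
  simp only [topWithin, mem_filter, Nat.lt_one_iff, Finset.card_eq_zero,
    Finset.filter_eq_empty_iff, not_lt, mem_singleton]
  constructor
  · rintro ⟨hb, h⟩
    exact hr (le_antisymm (hmax b hb) (h ha))
  · rintro rfl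
    exact ⟨ha, fun c hc => hmax c hc⟩

/-- Outcomes outside `H` are placed below the `|H|` highest positions. -/
lemma buildVote_lt_of_notMem (r : O → ℕ) {H : Finset O} {o : O} (ho : o ∉ H) :
    buildVote r H o < Fintype.card O - H.card := by
  rw [buildVote, if_neg ho, ← Finset.card_compl]
  apply Finset.card_lt_card
  rw [Finset.ssubset_iff_of_subset]
  · exact ⟨o, by simpa using ho, by simp⟩
  · intro c hc
    simp only [mem_filter, mem_univ, true_and] at hc
    simpa using hc.1

lemma le_buildVote_of_mem (r : O → ℕ) {H : Finset O} {o : O} (ho : o ∈ H) :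
    Fintype.card O - H.card ≤ buildVote r H o := by
  rw [buildVote, if_pos ho]
  exact Nat.le_add_right _ _

/-- The `r`-least preferred member of `H` is placed highest. -/
lemma buildVote_le_of_min {r : O → ℕ} {H : Finset O} {a : O} (ha : a ∈ H)
    (hmin : ∀ b ∈ H, r a ≤ r b) (o : O) : buildVote r H o ≤ buildVote r H a := by
  by_cases ho : o ∈ H
  · rw [buildVote, buildVote, if_pos ho, if_pos ha]
    refine Nat.add_le_add_left (Finset.card_le_card ?_) _
    intro c hc
    rw [mem_filter] at hc ⊢
    exact ⟨hc.1, (hmin o ho).trans_lt hc.2⟩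
  · exact (buildVote_lt_of_notMem r ho).le.trans (le_buildVote_of_mem r ha)

/-- The `r`-most preferred outcome outside `H` is placed lowest. -/
lemma buildVote_eq_zero_of_max {r : O → ℕ} {H : Finset O} {a : O} (ha : a ∉ H)
    (hmax : ∀ b ∉ H, r b ≤ r a) : buildVote r H a = 0 := by
  rw [buildVote, if_neg ha, Finset.card_eq_zero, Finset.filter_eq_empty_iff]
  rintro c - ⟨hc, h⟩
  exact absurd (hmax c hc) (not_le.mpr h)

/-- If every constructed vote awards the same number `t` of points to all outcomes of a set
`S`, then the stages shift all scores on `S` equally. -/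
lemma score_append_stageProfile (sc : ℕ → ℤ) (tb : O → ℕ) (P : List (O → ℕ))
    (H : Finset O) (S : Set O) (t : ℤ) (hS : ∀ r, ∀ o ∈ S, sc (buildVote r H o) = t)
    (n : ℕ) {o : O} (ho : o ∈ S) :
    score sc (P ++ stageProfile sc tb P H n) o = score sc P o + n * t := by
  induction n with
  | zero => simp [stageProfile]
  | succ n ih =>
    simp only [score, List.map_append, List.sum_append] at ih
    simp only [stageProfile, score, List.map_append, List.sum_append, List.map_cons,
      List.map_nil, List.sum_cons, List.sum_nil, hS _ o ho]
    push_cast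
    linarith

lemma swf_append_stageProfile_le_iff (sc : ℕ → ℤ) {tb : O → ℕ}
    (htb : Function.Injective tb) (P : List (O → ℕ)) (H : Finset O) (S : Set O) (t : ℤ)
    (hS : ∀ r, ∀ o ∈ S, sc (buildVote r H o) = t) (n : ℕ) {a b : O} (ha : a ∈ S)
    (hb : b ∈ S) :
    swf sc tb (P ++ stageProfile sc tb P H n) a ≤ swf sc tb (P ++ stageProfile sc tb P H n) b ↔
      swf sc tb P a ≤ swf sc tb P b := by
  rw [← not_lt, ← not_lt, swf_lt_swf_iff sc htb, swf_lt_swf_iff sc htb,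
    score_append_stageProfile sc tb P H S t hS n ha,
    score_append_stageProfile sc tb P H S t hS n hb, add_lt_add_iff_right, add_left_inj]

/-- If all of `H` receives equal points from every constructed vote, then `U` is a singleton. -/
lemma card_Uset_eq_one (sc : ℕ → ℤ) {tb : O → ℕ} (htb : Function.Injective tb)
    (P : List (O → ℕ)) {H : Finset O} (hH : H.Nonempty) (t : ℤ)
    (hS : ∀ r, ∀ o ∈ H, sc (buildVote r H o) = t) (k : ℕ) :
    (Uset sc tb P (swf sc tb P) H k).card = 1 := by
  obtain ⟨a, ha, hmin⟩ := H.exists_min_image (swf sc tb P) hH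
  have htop : ∀ l o, stageVote sc tb P H l o ≤ stageVote sc tb P H l a := fun l o =>
    buildVote_le_of_min ha (fun b hb => (swf_append_stageProfile_le_iff sc htb P H (↑H) t
      hS _ ha hb).mpr (hmin b hb)) o
  have haux : ∀ s, Uaux sc tb P (swf sc tb P) H k s = {a} := by
    intro s
    induction s with
    | zero => exact botWithin_one_eq_singleton (swf_injective sc htb P) ha hmin
    | succ s ih =>
      rw [Uaux, ih, Finset.union_eq_left, Finset.filter_eq_empty_iff.mpr]
      · exact Finset.empty_subset _
      · rintro u - ⟨l, -, -, ⟨u', hu', h⟩, -⟩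
        rw [mem_singleton] at hu'
        subst hu'
        exact absurd (htop l u) (not_le.mpr h)
  rw [Finset.card_eq_one]
  exact ⟨a, by ext u; simp [Uset, haux]⟩

/-- If all of `O ∖ H` receives equal points from every constructed vote, then `D` is a
singleton. -/
lemma card_Dset_eq_one (sc : ℕ → ℤ) {tb : O → ℕ} (htb : Function.Injective tb)
    (P : List (O → ℕ)) {H : Finset O} (hH : (univ \ H).Nonempty) (t : ℤ)
    (hS : ∀ r, ∀ o ∉ H, sc (buildVote r H o) = t) (k : ℕ) :
    (Dset sc tb P (swf sc tb P) H k).card = 1 := by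
  obtain ⟨a, ha, hmax⟩ := (univ \ H).exists_max_image (swf sc tb P) hH
  have haH : a ∉ H := by simpa using ha
  have hbot : ∀ l, stageVote sc tb P H l a = 0 := fun l =>
    buildVote_eq_zero_of_max haH (fun b hb => (swf_append_stageProfile_le_iff sc htb P H
      {o | o ∉ H} t hS _ hb haH).mpr (hmax b (by simpa using hb)))
  have haux : ∀ s, Daux sc tb P (swf sc tb P) H k s = {a} := by
    intro s
    induction s with
    | zero => exact topWithin_one_eq_singleton (swf_injective sc htb P) ha hmax
    | succ s ih =>
      rw [Daux, ih, Finset.union_eq_left, Finset.filter_eq_empty_iff.mpr]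
      · exact Finset.empty_subset _
      · rintro d - ⟨l, -, -, ⟨d', hd', h⟩, -⟩
        rw [mem_singleton] at hd'
        subst hd'
        rw [hbot l] at h
        exact absurd h (Nat.not_lt_zero _)
  rw [Finset.card_eq_one]
  exact ⟨a, by ext d; simp [Dset, haux]⟩

lemma IsVote.exists_eq {q : O → ℕ} (hq : IsVote q) {j : ℕ} (hj : j < Fintype.card O) :
    ∃ o, q o = j := by
  have hinj : Function.Injective fun o => (⟨q o, hq.2 o⟩ : Fin (Fintype.card O)) :=
    fun a b h => hq.1 (Fin.mk.inj_iff.mp h)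
  obtain ⟨o, ho⟩ := ((Fintype.bijective_iff_injective_and_card _).mpr
    ⟨hinj, (Fintype.card_fin _).symm⟩).2 ⟨j, hj⟩
  exact ⟨o, Fin.mk.inj_iff.mp ho⟩

/-- With at least two outcomes, `H^i` omits some outcome. -/
lemma univ_sdiff_Hset_nonempty (pt : O → ℕ) {po : O → ℕ} (hpo : IsVote po) (p : O) (i : ℕ)
    (hm : 1 < Fintype.card O) : (univ \ Hset pt po p i).Nonempty := by
  rcases le_or_gt i 1 with hi | hi
  · obtain ⟨o, ho⟩ := Fintype.exists_ne_of_one_lt_card hm p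
    refine ⟨o, ?_⟩
    simp [Hset, topWithin, ho, Nat.sub_eq_zero_of_le hi]
  · obtain ⟨o, hop, ho⟩ : ∃ o, o ≠ p ∧ Fintype.card O - i ≤ po o := by
      obtain ⟨a, ha⟩ := hpo.exists_eq (j := Fintype.card O - 1) (by omega)
      obtain ⟨b, hb⟩ := hpo.exists_eq (j := Fintype.card O - 2) (by omega)
      by_cases hap : a = p
      · exact ⟨b, by rintro rfl; subst hap; omega, by omega⟩
      · exact ⟨a, hap, by omega⟩
    refine ⟨o, ?_⟩
    have : o ∈ topSet po i := by simpa [topSet] using ho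
    simp [Hset, topWithin, hop, this]

/-- Lemma 5: at every iteration `i` of Algorithm 2 run with the x-approval
rule, `|U^i| = 1` or `|D^i| = 1`. -/
theorem lemma5_U_or_D_singleton
    (x : ℕ) (hx1 : 1 ≤ x) (hx2 : x < Fintype.card O)
    (tb : O → ℕ) (P : List (O → ℕ)) (po : O → ℕ) (p : O) (i k : ℕ)
    (htb : Function.Injective tb) (hP : ∀ q ∈ P, IsVote q) (hpo : IsVote po)
    (hi1 : 1 ≤ i) (hi2 : i ≤ (Fintype.card O + 1) / 2) :
    (UsetAlg (approvalVec (Fintype.card O) x) tb P po p i k).card = 1 ∨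
      (DsetAlg (approvalVec (Fintype.card O) x) tb P po p i k).card = 1 := by
  have hp : p ∈ Hset (swf (approvalVec (Fintype.card O) x) tb P) po p i := by simp [Hset]
  rcases le_or_gt (Hset (swf (approvalVec (Fintype.card O) x) tb P) po p i).card x with h | h
  · left
    refine card_Uset_eq_one _ htb P ⟨p, hp⟩ 1 (fun r o ho => if_pos ?_) k
    have := le_buildVote_of_mem r ho
    omega
  · right
    refine card_Dset_eq_one _ htb P (univ_sdiff_Hset_nonempty _ hpo p i (by omega)) 0
      (fun r o ho => if_neg ?_) k
    have := buildVote_lt_of_notMem r ho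
    omega
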